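/- arXiv:2211.07736 — 2 statements merged into one kernel-verified Lean document; each statement's English description precedes it below -/
import Mathlib

section
/- Let X be a complex Banach space and let T, S be bounded linear operators on X with TS = ST. If 0 ∈ acc σ(TS), then 0 ∈ acc σ(T) ∪ acc σ(S). -/
/-!
The double commutant of a commuting pair is a closed commutative subalgebra, and it contains the
inverse of each of its elements that is invertible in the whole algebra, so spectra may be computed
in it. There the spectrum of an element is the set of its values under the characters, which are
multiplicative; hence `σ(ab) ⊆ σ(a) σ(b)`. If `0` is an accumulation point of neither `σ(a)` nor
`σ(b)`, then the nonzero points of both spectra are bounded away from `0`, and so are the nonzero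
points of `σ(a) σ(b)`.
-/

open Ordinal Set

/-- The `α`-th Cantor–Bendixson derivative of a set `A ⊆ ℂ`, defined by transfinite
recursion: `cbd A 0 = A`, `cbd A (β+1) = derivedSet (cbd A β)` (the set of accumulation
points of `cbd A β`), and `cbd A α = ⋂_{β < α} cbd A β` for limit ordinals `α`. -/
noncomputable def cbd (A : Set ℂ) (α : Ordinal) : Set ℂ :=
  Ordinal.limitRecOn α A (fun _ ih => derivedSet ih)
    (fun α _ ih => ⋂ (β : Set.Iio α), ih β.1 β.2)

variable {X : Type*} [NormedAddCommGroup X] [NormedSpace ℂ X] [CompleteSpace X]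

/-- The restriction `T_M` of a bounded operator `T` to a `T`-invariant subspace `M`. -/
noncomputable def restr (T : X →L[ℂ] X) (M : Submodule ℂ X)
    (hM : ∀ x ∈ M, T x ∈ M) : M →L[ℂ] M :=
  { toLinearMap := T.toLinearMap.restrict hM
    cont := (T.continuous.comp continuous_subtype_val).subtype_mk _ }

open scoped Pointwise

section DerivedSet

theorem zero_mem_derivedSet_iff_norm {E : Type*} [SeminormedAddGroup E] {s : Set E} :
    (0 : E) ∈ derivedSet s ↔ ∀ ε > 0, ∃ x ∈ s, x ≠ 0 ∧ ‖x‖ < ε := by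
  rw [mem_derivedSet, accPt_iff_frequently, Metric.nhds_basis_ball.frequently_iff]
  simp only [mem_ball_zero_iff]
  grind

theorem zero_mem_derivedSet_or_of_mul {R : Type*} [NonUnitalSeminormedRing R] [NormMulClass R]
    {s t : Set R} (h : (0 : R) ∈ derivedSet (s * t)) :
    (0 : R) ∈ derivedSet s ∨ (0 : R) ∈ derivedSet t := by
  contrapose! h
  simp only [zero_mem_derivedSet_iff_norm] at h ⊢
  push Not at h ⊢
  obtain ⟨⟨ε, hε, le_norm_s⟩, δ, hδ, le_norm_t⟩ := h
  refine ⟨ε * δ, mul_pos hε hδ, ?_⟩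
  rintro _ ⟨x, hx, y, hy, rfl⟩ hxy
  calc
    ε * δ ≤ ‖x‖ * ‖y‖ := mul_le_mul (le_norm_s x hx (left_ne_zero_of_mul hxy))
      (le_norm_t y hy (right_ne_zero_of_mul hxy)) hδ.le (norm_nonneg x)
    _ = ‖x * y‖ := (norm_mul x y).symm

end DerivedSet

section Centralizer

theorem isUnit_coe_centralizer_iff {R A : Type*} [CommSemiring R] [Semiring A] [Algebra R A]
    {s : Set A} {x : Subalgebra.centralizer R s} : IsUnit (x : A) ↔ IsUnit x := by
  refine ⟨?_, fun h => h.map (Subalgebra.centralizer R s).val⟩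
  rintro ⟨u, hu⟩
  have inv_mem : (↑u⁻¹ : A) ∈ Subalgebra.centralizer R s := fun g hg =>
    Commute.units_inv_right (show g * u = u * g from hu ▸ x.2 g hg)
  exact ⟨⟨x, ⟨_, inv_mem⟩, Subtype.ext (by simp [← hu]), Subtype.ext (by simp [← hu])⟩, rfl⟩

theorem spectrum_coe_centralizer {R A : Type*} [CommRing R] [Ring A] [Algebra R A]
    {s : Set A} (x : Subalgebra.centralizer R s) : spectrum R (x : A) = spectrum R x := by
  ext r
  rw [spectrum.mem_iff, spectrum.mem_iff, ← isUnit_coe_centralizer_iff]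
  rfl

end Centralizer

section BanachAlgebra

variable {A : Type*} [NormedRing A] [NormedAlgebra ℂ A] [CompleteSpace A]

theorem exists_algHom_apply_eq_of_mem_spectrum {S : Subalgebra ℂ A} (hS : IsClosed (S : Set A))
    (hcomm : ∀ x ∈ S, ∀ y ∈ S, x * y = y * x) {x : S} {z : ℂ} (hz : z ∈ spectrum ℂ x) :
    ∃ φ : S →ₐ[ℂ] ℂ, φ x = z := by
  let _ : NormedCommRing S :=
    { (inferInstance : NormedRing S) with
      mul_comm := fun x y => Subtype.ext (hcomm x x.2 y y.2) }
  let _ : NormedAlgebra ℂ S := Subalgebra.toNormedAlgebra S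
  have : CompleteSpace S := hS.completeSpace_coe
  obtain ⟨φ, hφ⟩ := WeakDual.CharacterSpace.mem_spectrum_iff_exists.1 hz
  exact ⟨WeakDual.CharacterSpace.toAlgHom φ, hφ⟩

theorem spectrum_mul_subset_of_commute {a b : A} (h : Commute a b) :
    spectrum ℂ (a * b) ⊆ spectrum ℂ a * spectrum ℂ b := by
  intro z hz
  let D : Subalgebra ℂ A := Subalgebra.centralizer ℂ (Set.centralizer {a, b})
  have pair_subset : {a, b} ⊆ (D : Set A) := Set.subset_centralizer_centralizer
  have pair_comm : ∀ x ∈ ({a, b} : Set A), ∀ y ∈ ({a, b} : Set A), x * y = y * x := by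
    rintro x (rfl | rfl) y (rfl | rfl)
    exacts [rfl, h, h.symm, rfl]
  let a' : D := ⟨a, pair_subset (.inl rfl)⟩
  let b' : D := ⟨b, pair_subset (.inr rfl)⟩
  have hz' : z ∈ spectrum ℂ (a' * b') := spectrum_coe_centralizer (a' * b') ▸ hz
  obtain ⟨φ, rfl⟩ := exists_algHom_apply_eq_of_mem_spectrum (Set.isClosed_centralizer _)
    (Set.centralizer_centralizer_comm_of_comm pair_comm) hz'
  have apply_mem (x : D) : φ x ∈ spectrum ℂ (x : A) :=
    spectrum_coe_centralizer x ▸ AlgHom.apply_mem_spectrum φ x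
  exact ⟨φ a', apply_mem a', φ b', apply_mem b', (map_mul φ a' b').symm⟩

theorem zero_accPt_mul_general {a b : A} (h : Commute a b)
    (h0 : (0 : ℂ) ∈ derivedSet (spectrum ℂ (a * b))) :
    (0 : ℂ) ∈ derivedSet (spectrum ℂ a) ∪ derivedSet (spectrum ℂ b) :=
  zero_mem_derivedSet_or_of_mul (derivedSet_mono _ _ (spectrum_mul_subset_of_commute h) h0)

end BanachAlgebra

/-- If `0` is an accumulation point of `σ(TS)` for commuting bounded operators `T, S`,
then `0` is an accumulation point of `σ(T)` or of `σ(S)`. -/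
theorem zero_accPt_mul (T S : X →L[ℂ] X) (hc : T * S = S * T)
    (h0 : (0 : ℂ) ∈ derivedSet (spectrum ℂ (T * S))) :
    (0 : ℂ) ∈ derivedSet (spectrum ℂ T) ∪ derivedSet (spectrum ℂ S) :=
  zero_accPt_mul_general hc h0
end

section
/- Let X and Y be complex Banach spaces, T a bounded linear operator on X, S a bounded linear operator on Y, and β an ordinal. Then the direct sum operator S ⊕ T on Y × X is g_σ^{β+1}-invertible if and only if both S and T are g_σ^{β+1}-invertible. -/
open Ordinal Set

variable {X : Type*} [NormedAddCommGroup X] [NormedSpace ℂ X] [CompleteSpace X]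

/-- `T` is `g_σ^{β+1}`-invertible: there is `(M, N) ∈ Red T` (a pair of closed
`T`-invariant subspaces with `X = M ⊕ N`) such that `T_M` is invertible and
`acc^β σ(T_N) ⊆ {0}`. -/
def GInv (β : Ordinal) (T : X →L[ℂ] X) : Prop :=
  ∃ (M N : Submodule ℂ X) (hM : ∀ x ∈ M, T x ∈ M) (hN : ∀ x ∈ N, T x ∈ N),
    IsClosed (M : Set X) ∧ IsClosed (N : Set X) ∧ IsCompl M N ∧
    IsUnit (restr T M hM) ∧ cbd (spectrum ℂ (restr T N hN)) β ⊆ {0}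

/-!
The operator `T` is `g_σ^{β+1}`-invertible if and only if `0 ∉ acc^{β+1} σ(T)`. This settles the
theorem, since `σ(S ⊕ T) = σ(S) ∪ σ(T)` and `acc^{β+1}` commutes with finite unions of closed sets.

If `T = T_M ⊕ T_N` with `T_M` invertible and `acc^β σ(T_N) ⊆ {0}`, then `0` lies neither in `σ(T_M)`
nor in `acc^{β+1} σ(T_N)`. Conversely, suppose that `acc^β σ(T)` contains no point of a punctured
disc around `0`. The set `σ(T) \ acc^β σ(T)` is countable by the Cantor–Bendixson theorem, whereas
the disc contains uncountably many circles around `0`, so one of them misses `σ(T)`. The Riesz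
projection along that circle splits `T` into an invertible part, with spectrum outside the circle,
and a part with spectrum inside it.
-/

section CantorBendixson

variable {A B : Set ℂ}

theorem cbd_zero (A : Set ℂ) : cbd A 0 = A := by
  simp [cbd]

theorem cbd_add_one (A : Set ℂ) (β : Ordinal) : cbd A (β + 1) = derivedSet (cbd A β) := by
  simp [cbd]

theorem cbd_limit (A : Set ℂ) {α : Ordinal} (hα : Order.IsSuccLimit α) :
    cbd A α = ⋂ β : Iio α, cbd A β := by
  unfold cbd
  rw [Ordinal.limitRecOn_limit _ _ _ _ hα]

theorem isClosed_cbd (hA : IsClosed A) (α : Ordinal) : IsClosed (cbd A α) := by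
  induction α using Ordinal.limitRecOn with
  | zero => rwa [cbd_zero]
  | add_one β _ =>
    rw [cbd_add_one]
    exact isClosed_derivedSet _
  | limit α hα ih =>
    rw [cbd_limit A hα]
    exact isClosed_iInter fun β => ih β β.2

theorem cbd_antitone (hA : IsClosed A) : Antitone (cbd A) := by
  intro γ α hγα
  induction α using Ordinal.limitRecOn with
  | zero => rw [nonpos_iff_eq_zero.1 hγα]
  | add_one β ih =>
    rcases hγα.eq_or_lt with rfl | hγβ
    · exact le_rfl
    · rw [cbd_add_one]
      exact ((isClosed_iff_derivedSet_subset _).1 (isClosed_cbd hA β)).trans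
        (ih (Order.lt_add_one_iff.1 hγβ))
  | limit α hα _ =>
    rcases hγα.eq_or_lt with rfl | hγα
    · exact le_rfl
    · rw [cbd_limit A hα]
      exact iInter_subset (fun β : Iio α => cbd A β) ⟨γ, hγα⟩

theorem cbd_subset (hA : IsClosed A) (α : Ordinal) : cbd A α ⊆ A := by
  simpa only [cbd_zero] using cbd_antitone hA (zero_le : 0 ≤ α)

theorem cbd_mono (h : A ⊆ B) (α : Ordinal) : cbd A α ⊆ cbd B α := by
  induction α using Ordinal.limitRecOn with
  | zero => rwa [cbd_zero, cbd_zero]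
  | add_one β ih =>
    rw [cbd_add_one, cbd_add_one]
    exact derivedSet_mono _ _ ih
  | limit α hα ih =>
    rw [cbd_limit A hα, cbd_limit B hα]
    exact iInter_mono fun β => ih β β.2

theorem cbd_union (hA : IsClosed A) (hB : IsClosed B) (α : Ordinal) :
    cbd (A ∪ B) α = cbd A α ∪ cbd B α := by
  induction α using Ordinal.limitRecOn with
  | zero => simp only [cbd_zero]
  | add_one β ih => simp only [cbd_add_one, ih, derivedSet_union]
  | limit α hα ih =>
    have antitone_Iio {C : Set ℂ} (hC : IsClosed C) : Antitone fun β : Iio α => cbd C β :=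
      fun _ _ h => cbd_antitone hC h
    rw [cbd_limit _ hα, cbd_limit A hα, cbd_limit B hα,
      ← iInter_union_of_antitone (antitone_Iio hA) (antitone_Iio hB)]
    exact iInter_congr fun β => ih β β.2

theorem subset_cbd_of_preperfect (hA : Preperfect A) (h : A ⊆ B) (α : Ordinal) :
    A ⊆ cbd B α := by
  induction α using Ordinal.limitRecOn with
  | zero => rwa [cbd_zero]
  | add_one β ih =>
    rw [cbd_add_one]
    exact (preperfect_iff_subset_derivedSet.1 hA).trans (derivedSet_mono _ _ ih)
  | limit α hα ih =>
    rw [cbd_limit B hα]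
    exact subset_iInter fun β => ih β β.2

theorem countable_diff_cbd (hA : IsClosed A) (α : Ordinal) : (A \ cbd A α).Countable := by
  obtain ⟨V, D, hV, hD, rfl⟩ := exists_countable_union_perfect_of_isClosed hA
  have hDα : D ⊆ cbd (V ∪ D) α := subset_cbd_of_preperfect hD.acc subset_union_right α
  exact hV.mono fun z hz => hz.1.resolve_right fun hzD => hz.2 (hDα hzD)

end CantorBendixson

section Annulus

open Metric

theorem exists_ball_inter_subset_singleton {E : Type*} [PseudoMetricSpace E] {A : Set E} {c : E}
    (h : c ∉ derivedSet A) : ∃ ε > 0, ball c ε ∩ A ⊆ {c} := by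
  rw [mem_derivedSet, accPt_iff_nhds] at h
  push Not at h
  obtain ⟨U, hU, hUA⟩ := h
  obtain ⟨ε, hε, hεU⟩ := Metric.mem_nhds_iff.1 hU
  exact ⟨ε, hε, fun z hz => hUA z ⟨hεU hz.1, hz.2⟩⟩

theorem exists_sphere_disjoint_of_countable {E : Type*} [PseudoMetricSpace E] {V : Set E}
    (hV : V.Countable) (c : E) {ε : ℝ} (hε : 0 < ε) :
    ∃ r ∈ Ioo 0 ε, Disjoint (sphere c r) V := by
  obtain ⟨r, hr, hrV⟩ : ∃ r ∈ Ioo 0 ε, r ∉ (dist · c) '' V := by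
    by_contra! h
    exact (Cardinal.Real.Ioo_countable_iff.1 ((hV.image _).mono h)).not_gt hε
  exact ⟨r, hr, disjoint_left.2 fun z hzr hzV => hrV ⟨z, hzV, hzr⟩⟩

theorem exists_annulus_disjoint_of_sphere_disjoint {E : Type*} [PseudoMetricSpace E] {A : Set E}
    (hA : IsCompact A) {c : E} {s : ℝ} (h : Disjoint (sphere c s) A) :
    ∃ t > s, Disjoint (closedBall c t \ ball c s) A := by
  have hs : s ∈ ((dist · c) '' A)ᶜ := fun ⟨z, hzA, hzs⟩ => disjoint_left.1 h hzs hzA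
  have hclosed : IsClosed ((dist · c) '' A) := (hA.image (by fun_prop)).isClosed
  obtain ⟨t, hst, ht⟩ := mem_nhdsGE_iff_exists_Icc_subset.1
    (mem_nhdsWithin_of_mem_nhds (hclosed.isOpen_compl.mem_nhds hs))
  exact ⟨t, hst, disjoint_left.2 fun z hz hzA =>
    ht ⟨not_lt.1 hz.2, hz.1⟩ (mem_image_of_mem (dist · c) hzA)⟩

theorem exists_annulus_disjoint_of_notMem_cbd {A : Set ℂ} (hA : IsCompact A) {c : ℂ}
    {β : Ordinal} (h : c ∉ cbd A (β + 1)) :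
    ∃ s t, 0 < s ∧ s < t ∧ Disjoint (closedBall c t \ ball c s) A ∧
      closedBall c s ∩ cbd A β ⊆ {c} := by
  rw [cbd_add_one] at h
  obtain ⟨ε, hε, hball⟩ := exists_ball_inter_subset_singleton h
  obtain ⟨s, ⟨hs, hsε⟩, hdiff⟩ :=
    exists_sphere_disjoint_of_countable (countable_diff_cbd hA.isClosed β) c hε
  have hsphere : Disjoint (sphere c s) A := disjoint_left.2 fun z hzs hzA => by
    have hzβ : z ∈ cbd A β := by_contra fun hzβ => disjoint_left.1 hdiff hzs ⟨hzA, hzβ⟩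
    exact ne_of_mem_sphere hzs hs.ne' (hball ⟨sphere_subset_ball hsε hzs, hzβ⟩)
  obtain ⟨t, hst, hann⟩ := exists_annulus_disjoint_of_sphere_disjoint hA hsphere
  exact ⟨s, t, hs, hst, hann,
    (inter_subset_inter_left _ (closedBall_subset_ball hsε)).trans hball⟩

end Annulus

section Resolvent

variable {A : Type*} [NormedRing A] [NormedAlgebra ℂ A] {a b : A} {z : ℂ}

theorem mul_resolvent (hz : z ∈ resolventSet ℂ a) :
    (algebraMap ℂ A z - a) * resolvent a z = 1 :=
  Ring.mul_inverse_cancel _ hz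

theorem resolvent_mul (hz : z ∈ resolventSet ℂ a) :
    resolvent a z * (algebraMap ℂ A z - a) = 1 :=
  Ring.inverse_mul_cancel _ hz

theorem commute_resolvent (h : Commute b a) (z : ℂ) : Commute b (resolvent a z) := by
  have hsub : Commute b (algebraMap ℂ A z - a) :=
    (Algebra.commute_algebraMap_right z b).sub_right h
  by_cases hz : IsUnit (algebraMap ℂ A z - a)
  · obtain ⟨u, hu⟩ := hz
    rw [resolvent, ← hu, Ring.inverse_unit]
    exact (hu ▸ hsub).units_inv_right
  · rw [resolvent, Ring.inverse_non_unit _ hz]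
    exact Commute.zero_right b

theorem continuousOn_resolvent [CompleteSpace A] {K : Set ℂ} (hK : K ⊆ resolventSet ℂ a) :
    ContinuousOn (resolvent a) K := fun _ hz =>
  (spectrum.hasDerivAt_resolvent_const_left (hK hz)).continuousAt.continuousWithinAt

end Resolvent

section CircleIntegral

open Metric

theorem circleIntegral_clm_comp_comm {E F : Type*} [NormedAddCommGroup E] [NormedSpace ℂ E]
    [CompleteSpace E] [NormedAddCommGroup F] [NormedSpace ℂ F] [CompleteSpace F]
    (L : E →L[ℂ] F) {f : ℂ → E} {c : ℂ} {r : ℝ} (hf : CircleIntegrable f c r) :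
    (∮ w in C(c, r), L (f w)) = L (∮ w in C(c, r), f w) := by
  simp only [circleIntegral, ← ContinuousLinearMap.intervalIntegral_comp_comm L hf.out, map_smul]

variable {A : Type*} [NormedRing A] [NormedAlgebra ℂ A] [CompleteSpace A] {f : ℂ → A}
  {c : ℂ} {r : ℝ}

theorem circleIntegral_const_mul (b : A) (hf : CircleIntegrable f c r) :
    (∮ w in C(c, r), b * f w) = b * ∮ w in C(c, r), f w :=
  circleIntegral_clm_comp_comm (ContinuousLinearMap.mul ℂ A b) hf

theorem circleIntegral_mul_const (b : A) (hf : CircleIntegrable f c r) :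
    (∮ w in C(c, r), f w * b) = (∮ w in C(c, r), f w) * b :=
  circleIntegral_clm_comp_comm ((ContinuousLinearMap.mul ℂ A).flip b) hf

theorem commute_circleIntegral {b : A} (h : ∀ w, Commute b (f w)) (c : ℂ) (r : ℝ) :
    Commute b (∮ w in C(c, r), f w) := by
  by_cases hf : CircleIntegrable f c r
  · rw [commute_iff_eq, ← circleIntegral_const_mul b hf, ← circleIntegral_mul_const b hf]
    simp only [(h _).eq]
  · rw [circleIntegral.integral_undef hf]
    exact Commute.zero_right b

theorem circleIntegral_sub_inv_of_notMem_closedBall {z : ℂ} (hr : 0 ≤ r)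
    (hz : z ∉ closedBall c r) : (∮ w in C(c, r), (w - z)⁻¹) = 0 := by
  have hne : ∀ w ∈ closedBall c r, w - z ≠ 0 := fun w hw h => hz (sub_eq_zero.1 h ▸ hw)
  have hdiff : DifferentiableOn ℂ (fun w => (w - z)⁻¹) (closedBall c r) := by
    fun_prop (disch := assumption)
  exact (hdiff.diffContOnCl_ball subset_rfl).circleIntegral_eq_zero hr

end CircleIntegral

section RieszProjection

open Complex Metric

variable {A : Type*} [NormedRing A] [NormedAlgebra ℂ A]

/-- The contour integral `(2πi)⁻¹ ∮ f(w) (w - a)⁻¹ dw` of the Riesz–Dunford functional calculus,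
over the circle of centre `c` and radius `r`. The contour is a single circle, so that this is
`f(a)` only if the spectrum of `a` lies inside it. -/
noncomputable def dunfordIntegral (a : A) (c : ℂ) (r : ℝ) (f : ℂ → ℂ) : A :=
  (2 * Real.pi * I : ℂ)⁻¹ • ∮ w in C(c, r), f w • resolvent a w

/-- The Riesz projection of `a` onto the part of its spectrum inside the circle of centre `c` and
radius `r`. It is a projection only if that circle misses the spectrum of `a`. -/
noncomputable def rieszProjection (a : A) (c : ℂ) (r : ℝ) : A :=
  dunfordIntegral a c r 1

variable [CompleteSpace A] {a : A} {c : ℂ} {r s t : ℝ}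

theorem commute_dunfordIntegral {b : A} (h : Commute b a) (c : ℂ) (r : ℝ) (f : ℂ → ℂ) :
    Commute b (dunfordIntegral a c r f) :=
  (commute_circleIntegral (fun w => (commute_resolvent h w).smul_right (f w)) c r).smul_right _

theorem sub_mul_dunfordIntegral (hr : 0 ≤ r) (h : sphere c r ⊆ resolventSet ℂ a) {f : ℂ → ℂ}
    (hf : ContinuousOn f (sphere c r)) (z : ℂ) :
    (algebraMap ℂ A z - a) * dunfordIntegral a c r f =
      ((2 * Real.pi * I : ℂ)⁻¹ * ∮ w in C(c, r), f w) • (1 : A) +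
        dunfordIntegral a c r fun w => (z - w) * f w := by
  have hres := continuousOn_resolvent h
  have expand : ∀ w ∈ sphere c r, (algebraMap ℂ A z - a) * f w • resolvent a w =
      f w • (1 : A) + ((z - w) * f w) • resolvent a w := fun w hw => by
    rw [← mul_resolvent (h hw)]
    simp only [Algebra.algebraMap_eq_smul_one, sub_mul, mul_smul_comm, smul_mul_assoc, one_mul]
    module
  rw [dunfordIntegral, mul_smul_comm,
    ← circleIntegral_const_mul _ (ContinuousOn.circleIntegrable hr (by fun_prop)),
    circleIntegral.integral_congr hr expand,
    circleIntegral.integral_add (ContinuousOn.circleIntegrable hr (by fun_prop))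
      (ContinuousOn.circleIntegrable hr (by fun_prop)),
    circleIntegral.integral_smul_const, smul_add, smul_smul, dunfordIntegral]

theorem sub_mul_dunfordIntegral_sub_inv (hr : 0 ≤ r) (h : sphere c r ⊆ resolventSet ℂ a)
    {z : ℂ} (hz : z ∉ sphere c r) :
    (algebraMap ℂ A z - a) * dunfordIntegral a c r (fun w => (w - z)⁻¹) =
      ((2 * Real.pi * I : ℂ)⁻¹ * ∮ w in C(c, r), (w - z)⁻¹) • (1 : A) -
        rieszProjection a c r := by
  have hne : ∀ w ∈ sphere c r, w - z ≠ 0 := fun w hw h => hz (sub_eq_zero.1 h ▸ hw)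
  have hneg : dunfordIntegral a c r (fun w => (z - w) * (w - z)⁻¹) = -rieszProjection a c r := by
    rw [rieszProjection, dunfordIntegral, dunfordIntegral, ← neg_one_smul ℂ, smul_comm,
      ← circleIntegral.integral_smul (-1 : ℂ) (fun w => (1 : ℂ → ℂ) w • resolvent a w)]
    congr 1
    refine circleIntegral.integral_congr hr fun w hw => ?_
    simp only [← neg_sub w z, neg_mul, mul_inv_cancel₀ (hne w hw), Pi.one_apply, one_smul]
  rw [sub_mul_dunfordIntegral hr h (by fun_prop (disch := assumption)), hneg, sub_eq_add_neg]

theorem sub_mul_dunfordIntegral_of_mem_ball (h : sphere c r ⊆ resolventSet ℂ a) {z : ℂ}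
    (hz : z ∈ ball c r) :
    (algebraMap ℂ A z - a) * dunfordIntegral a c r (fun w => (w - z)⁻¹) =
      1 - rieszProjection a c r := by
  rw [sub_mul_dunfordIntegral_sub_inv (pos_of_mem_ball hz).le h fun hz' => (hz.ne hz'),
    circleIntegral.integral_sub_inv_of_mem_ball hz, inv_mul_cancel₀ two_pi_I_ne_zero, one_smul]

theorem sub_mul_dunfordIntegral_of_notMem_closedBall (hr : 0 ≤ r)
    (h : sphere c r ⊆ resolventSet ℂ a) {z : ℂ} (hz : z ∉ closedBall c r) :
    (algebraMap ℂ A z - a) * dunfordIntegral a c r (fun w => (w - z)⁻¹) =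
      -rieszProjection a c r := by
  rw [sub_mul_dunfordIntegral_sub_inv hr h fun hz' => hz (sphere_subset_closedBall hz'),
    circleIntegral_sub_inv_of_notMem_closedBall hr hz, mul_zero, zero_smul, _root_.zero_sub]

theorem differentiableOn_dunfordIntegral_sub_inv (h : sphere c r ⊆ resolventSet ℂ a) :
    DifferentiableOn ℂ (fun z => dunfordIntegral a c r fun w => (w - z)⁻¹) (ball c r) := by
  intro z hz
  have hr := pos_of_mem_ball hz
  lift r to NNReal using hr.le
  have hseries := hasFPowerSeriesOn_cauchy_integral
    ((continuousOn_resolvent h).circleIntegrable hr.le) (by exact_mod_cast hr)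
  refine (hseries.analyticAt_of_mem ?_).differentiableAt.differentiableWithinAt
  rwa [eball_coe]

theorem rieszProjection_eq_of_annulus (hs : 0 < s) (hst : s ≤ t)
    (h : closedBall c t \ ball c s ⊆ resolventSet ℂ a) :
    rieszProjection a c t = rieszProjection a c s := by
  have hopen : ball c t \ closedBall c s ⊆ closedBall c t \ ball c s :=
    sdiff_subset_sdiff ball_subset_closedBall ball_subset_closedBall
  simp only [rieszProjection, dunfordIntegral, Pi.one_apply, one_smul]
  rw [circleIntegral_eq_of_differentiable_on_annulus_off_countable hs hst countable_empty
    (continuousOn_resolvent h) fun z hz =>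
      (spectrum.hasDerivAt_resolvent_const_left (h (hopen hz.1))).differentiableAt]

-- With `P` the projection and `Q z = (z - a)⁻¹ (1 - P)`, the Cauchy integral over the outer circle
-- extends `Q` holomorphically to the disc, so the integral of `Q` over the inner circle vanishes;
-- up to a constant, that integral is `P (1 - P)`.
theorem isIdempotentElem_rieszProjection (hs : 0 < s) (hst : s < t)
    (h : closedBall c t \ ball c s ⊆ resolventSet ℂ a) :
    IsIdempotentElem (rieszProjection a c s) := by
  have hsphere_s : sphere c s ⊆ resolventSet ℂ a := fun z hz =>
    h ⟨(mem_sphere.1 hz).trans_le hst.le, fun hz' => hz'.ne hz⟩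
  have hsphere_t : sphere c t ⊆ resolventSet ℂ a := fun z hz =>
    h ⟨sphere_subset_closedBall hz, fun hz' => (hz'.trans hst).ne hz⟩
  have hres : ∀ z ∈ sphere c s, resolvent a z * (1 - rieszProjection a c s) =
      dunfordIntegral a c t fun w => (w - z)⁻¹ := fun z hz => by
    rw [← rieszProjection_eq_of_annulus hs hst.le h, ← sub_mul_dunfordIntegral_of_mem_ball
      hsphere_t (sphere_subset_ball hst hz), ← mul_assoc, resolvent_mul (hsphere_s hz), one_mul]
  have hzero : (∮ z in C(c, s), resolvent a z * (1 - rieszProjection a c s)) = 0 := by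
    rw [circleIntegral.integral_congr hs.le hres]
    exact ((differentiableOn_dunfordIntegral_sub_inv hsphere_t).diffContOnCl_ball
      (closedBall_subset_ball hst)).circleIntegral_eq_zero hs.le
  have hmul : rieszProjection a c s * (1 - rieszProjection a c s) = 0 := by
    nth_rw 1 [rieszProjection, dunfordIntegral]
    simp only [Pi.one_apply, one_smul]
    rw [smul_mul_assoc, ← circleIntegral_mul_const _
      ((continuousOn_resolvent hsphere_s).circleIntegrable hs.le), hzero, smul_zero]
  rw [_root_.mul_sub, mul_one, sub_eq_zero] at hmul
  exact hmul.symm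

end RieszProjection

section Restriction

variable {E : Type*} [NormedAddCommGroup E] [NormedSpace ℂ E] {T p q : E →L[ℂ] E}
  {M : Submodule ℂ E}

theorem coe_restr_apply (hM : ∀ x ∈ M, T x ∈ M) (x : M) : (restr T M hM x : E) = T x :=
  rfl

theorem algebraMap_sub_restr (hM : ∀ x ∈ M, T x ∈ M) (z : ℂ) :
    algebraMap ℂ (M →L[ℂ] M) z - restr T M hM =
      restr (algebraMap ℂ (E →L[ℂ] E) z - T) M
        fun x hx => M.sub_mem (M.smul_mem z hx) (hM x hx) :=
  rfl

theorem apply_mem_ker_of_commute (h : Commute T p) : ∀ x ∈ p.ker, T x ∈ p.ker := fun x hx => by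
  have hTp : T (p x) = p (T x) := DFunLike.congr_fun h.eq x
  have hpx : p x = 0 := hx
  rw [LinearMap.mem_ker, ContinuousLinearMap.coe_coe, ← hTp, hpx, map_zero]

theorem isUnit_restr_ker (hT : ∀ x ∈ p.ker, T x ∈ p.ker) (h : Commute T q)
    (hTq : T * q = 1 - p) : IsUnit (restr T p.ker hT) := by
  have hqp : Commute q p := by
    rw [← sub_sub_cancel 1 p, ← hTq]
    exact (Commute.one_right q).sub_right (h.symm.mul_right (Commute.refl q))
  have T_q_apply (x : p.ker) : T (q x) = x := by
    have hx : p x = 0 := x.2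
    calc T (q x) = x - p x := DFunLike.congr_fun hTq (x : E)
      _ = x := by rw [hx, _root_.sub_zero]
  have q_T_apply (x : p.ker) : q (T x) = x :=
    (DFunLike.congr_fun h.eq (x : E)).symm.trans (T_q_apply x)
  exact ⟨⟨restr T p.ker hT, restr q p.ker (apply_mem_ker_of_commute hqp),
    by ext x; exact T_q_apply x, by ext x; exact q_T_apply x⟩, rfl⟩

end Restriction

section Spectrum

-- For an operator on a submodule, instance unification in `spectrum.isClosed` itself times out.
theorem isClosed_spectrum_clm {E : Type*} [NormedAddCommGroup E] [NormedSpace ℂ E]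
    [CompleteSpace E] (T : E →L[ℂ] E) : IsClosed (spectrum ℂ T) :=
  spectrum.isClosed T

theorem spectrum_prodMap {𝕜 E F : Type*} [NontriviallyNormedField 𝕜] [NormedAddCommGroup E]
    [NormedSpace 𝕜 E] [CompleteSpace E] [NormedAddCommGroup F] [NormedSpace 𝕜 F] [CompleteSpace F]
    (S : E →L[𝕜] E) (T : F →L[𝕜] F) :
    spectrum 𝕜 (S.prodMap T) = spectrum 𝕜 S ∪ spectrum 𝕜 T := by
  ext z
  rw [← not_iff_not, mem_union, not_or]
  simp only [spectrum.notMem_iff, ContinuousLinearMap.isUnit_iff_bijective]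
  exact Prod.map_bijective (f := algebraMap 𝕜 (E →L[𝕜] E) z - S)
    (g := algebraMap 𝕜 (F →L[𝕜] F) z - T)

theorem spectrum_eq_union_of_isTopCompl (T : X →L[ℂ] X) {M N : Submodule ℂ X}
    (hM : ∀ x ∈ M, T x ∈ M) (hN : ∀ x ∈ N, T x ∈ N) (h : M.IsTopCompl N) :
    spectrum ℂ T = spectrum ℂ (restr T M hM) ∪ spectrum ℂ (restr T N hN) := by
  have : CompleteSpace M := h.isClosed.completeSpace_coe
  have : CompleteSpace N := h.isClosed'.completeSpace_coe
  let e := M.prodEquivOfIsTopCompl N h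
  have hconj : e.conjContinuousAlgEquiv ((restr T M hM).prodMap (restr T N hN)) = T := by
    ext x
    obtain ⟨y, rfl⟩ := e.surjective x
    simp [e, coe_restr_apply]
  rw [← spectrum_prodMap, ← AlgEquiv.spectrum_eq e.conjContinuousAlgEquiv, hconj]

end Spectrum

section RieszDecomposition

open Metric

theorem exists_isTopCompl_spectrum_restr (T : X →L[ℂ] X) {c : ℂ} {s t : ℝ} (hs : 0 < s)
    (hst : s < t) (h : closedBall c t \ ball c s ⊆ resolventSet ℂ T) :
    ∃ (M N : Submodule ℂ X) (hM : ∀ x ∈ M, T x ∈ M) (hN : ∀ x ∈ N, T x ∈ N),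
      M.IsTopCompl N ∧ Disjoint (spectrum ℂ (restr T M hM)) (ball c s) ∧
        spectrum ℂ (restr T N hN) ⊆ closedBall c s := by
  let p := rieszProjection T c s
  let D (z : ℂ) := dunfordIntegral T c s fun w => (w - z)⁻¹
  have hsphere : sphere c s ⊆ resolventSet ℂ T := fun z hz =>
    h ⟨(mem_sphere.1 hz).trans_le hst.le, fun hz' => hz'.ne hz⟩
  have hTp : Commute T p := commute_dunfordIntegral (Commute.refl T) c s 1
  have hcomm (z : ℂ) : Commute (algebraMap ℂ (X →L[ℂ] X) z - T) (D z) :=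
    commute_dunfordIntegral ((Algebra.commute_algebraMap_left z T).sub_left (Commute.refl T)) c s _
  have hidem : IsIdempotentElem p := isIdempotentElem_rieszProjection hs hst h
  have hrange : p.range = (1 - p : X →L[ℂ] X).ker :=
    LinearMap.IsIdempotentElem.range_eq_ker_one_sub
      (ContinuousLinearMap.IsIdempotentElem.toLinearMap hidem)
  refine ⟨p.ker, (1 - p : X →L[ℂ] X).ker, apply_mem_ker_of_commute hTp,
    apply_mem_ker_of_commute ((Commute.one_right T).sub_right hTp),
    hrange ▸ (ContinuousLinearMap.IsIdempotentElem.isTopCompl hidem).symm,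
    disjoint_right.2 fun z hz => ?_, fun z => not_imp_not.1 fun hz => ?_⟩
  · rw [spectrum.notMem_iff, algebraMap_sub_restr]
    exact isUnit_restr_ker _ (hcomm z) (sub_mul_dunfordIntegral_of_mem_ball hsphere hz)
  · rw [spectrum.notMem_iff, algebraMap_sub_restr]
    refine isUnit_restr_ker _ (hcomm z).neg_right ?_
    rw [mul_neg, sub_mul_dunfordIntegral_of_notMem_closedBall hs.le hsphere hz, neg_neg,
      sub_sub_cancel]

end RieszDecomposition

section GInv

open Metric

theorem notMem_cbd_add_one_of_gInv {β : Ordinal} {T : X →L[ℂ] X} (h : GInv β T) :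
    (0 : ℂ) ∉ cbd (spectrum ℂ T) (β + 1) := by
  obtain ⟨M, N, hM, hN, hMc, hNc, hMN, hunit, hN0⟩ := h
  have : CompleteSpace M := hMc.completeSpace_coe
  have : CompleteSpace N := hNc.completeSpace_coe
  have hσM : IsClosed (spectrum ℂ (restr T M hM)) := isClosed_spectrum_clm _
  have hσN : IsClosed (spectrum ℂ (restr T N hN)) := isClosed_spectrum_clm _
  rw [spectrum_eq_union_of_isTopCompl T hM hN
    (Submodule.IsCompl.isTopCompl_of_isClosed hMN hMc hNc), cbd_union hσM hσN, mem_union, not_or]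
  constructor
  · exact fun h0 => (spectrum.zero_notMem_iff ℂ).2 hunit (cbd_subset hσM _ h0)
  · rw [cbd_add_one, mem_derivedSet, accPt_iff_nhds]
    intro h0
    obtain ⟨z, hz, hz0⟩ := h0 univ Filter.univ_mem
    exact hz0 (hN0 hz.2)

theorem gInv_of_notMem_cbd_add_one {β : Ordinal} {T : X →L[ℂ] X}
    (h : (0 : ℂ) ∉ cbd (spectrum ℂ T) (β + 1)) : GInv β T := by
  obtain ⟨s, t, hs, hst, hann, hsub⟩ :=
    exists_annulus_disjoint_of_notMem_cbd (spectrum.isCompact T) h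
  obtain ⟨M, N, hM, hN, hMN, hMs, hNs⟩ := exists_isTopCompl_spectrum_restr T hs hst
    (disjoint_compl_right_iff_subset.1 hann)
  have : CompleteSpace N := hMN.isClosed'.completeSpace_coe
  have hNT : spectrum ℂ (restr T N hN) ⊆ spectrum ℂ T := by
    rw [spectrum_eq_union_of_isTopCompl T hM hN hMN]
    exact subset_union_right
  have hσN : IsClosed (spectrum ℂ (restr T N hN)) := isClosed_spectrum_clm _
  refine ⟨M, N, hM, hN, hMN.isClosed, hMN.isClosed', hMN.isCompl,
    (spectrum.zero_notMem_iff ℂ).1 (disjoint_right.1 hMs (mem_ball_self hs)), fun z hz => ?_⟩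
  exact hsub ⟨hNs (cbd_subset hσN β hz), cbd_mono hNT β hz⟩

theorem gInv_iff_notMem_cbd_add_one {β : Ordinal} {T : X →L[ℂ] X} :
    GInv β T ↔ (0 : ℂ) ∉ cbd (spectrum ℂ T) (β + 1) :=
  ⟨notMem_cbd_add_one_of_gInv, gInv_of_notMem_cbd_add_one⟩

end GInv

/-- The direct sum `S ⊕ T` is `g_σ^{β+1}`-invertible iff both `S` and `T` are. -/
theorem gInv_prodMap_iff {Y : Type*} [NormedAddCommGroup Y] [NormedSpace ℂ Y]
    [CompleteSpace Y] (T : X →L[ℂ] X) (S : Y →L[ℂ] Y) (β : Ordinal) :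
    GInv β (S.prodMap T) ↔ GInv β S ∧ GInv β T := by
  simp only [gInv_iff_notMem_cbd_add_one, spectrum_prodMap,
    cbd_union (spectrum.isClosed S) (spectrum.isClosed T), mem_union, not_or]
end
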